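/- Let n ≥ 2. Let VB_n be the group presented by generators σ_1,…,σ_{n−1}, ν_1,…,ν_{n−1} subject to: σ_iσ_jσ_i = σ_jσ_iσ_j and ν_iν_jν_i = ν_jν_iν_j for |i−j| = 1; σ_iσ_j = σ_jσ_i, ν_iν_j = ν_jν_i and σ_iν_j = ν_jσ_i for |i−j| ≥ 2; ν_i² = 1; σ_iν_jν_i = ν_jν_iσ_j for |i−j| = 1; and let π : VB_n → Perm(Fin n) be the group homomorphism with π(σ_i) = π(ν_i) the transposition of i and i+1. Let TVB_n be the monoid presented by generators s_i, s_i', v_i, e_i (1 ≤ i ≤ n−1) subject to: (B0) s_i s_i' = s_i' s_i = 1; the above braid, virtual, and mixed relations with σ_i replaced by s_i and ν_i by v_i (using s_i' for σ_i⁻¹); (T1) e_i² = e_i; (T2) e_i e_j = e_j e_i; (T3) e_i s_j s_i = s_j s_i e_j for |i−j| = 1; (T4) s_i e_j = e_j s_i for |i−j| ≠ 1; (T5) e_i e_j s_i = e_j s_i e_j = s_i e_i e_j for |i−j| = 1; (TV1) e_i v_j v_i = v_j v_i e_j for |i−j| = 1; (TV2) e_i v_j s_i = v_j s_i e_j for |i−j|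 = 1; (TV3) e_i s_j v_i = s_j v_i e_j for |i−j| = 1; (TV4) v_i e_j = s_i e_j s_i' v_i for |i−j| = 1; (TV5) e_i v_j = v_j e_i for |i−j| ≠ 1; (TV6) e_i e_j v_i = e_j v_i e_j = v_i e_i e_j for |i−j| = 1. Then there is a bijection F : TVB_n → Setoid(Fin n) × VB_n such that F(1) = (⊥, 1), F(s_i) = (⊥, σ_i), F(s_i') = (⊥, σ_i⁻¹), F(v_i) = (⊥, ν_i), F(e_i) = (μ_{i,i+1}, 1), and F(x·y) = (F(x)₁ ⊔ π(F(x)₂) • F(y)₁, F(x)₂ · F(y)₂) for all x, y, where w • I is the transported partition (x ∼_{w•I} y iff w⁻¹x ∼_I w⁻¹y). -/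

import Mathlib

/-- The commutative idempotent monoid of set partitions of `α`, realized as `Setoid α`
with multiplication the lattice join and identity the discrete partition `⊥`. -/
instance setoidCommMonoid (α : Type*) : CommMonoid (Setoid α) where
  mul := (· ⊔ ·)
  one := ⊥
  mul_assoc := sup_assoc
  one_mul := bot_sup_eq
  mul_one := sup_bot_eq
  mul_comm := sup_comm

/-- `muSet X` is the partition of `α` whose only (possibly) non-singleton block is `X`. -/
def muSet {α : Type*} (X : Set α) : Setoid α :=
  Relation.EqvGen.setoid (fun x y => x ∈ X ∧ y ∈ X)

/-- `mu i j` is the partition whose only non-singleton block is `{i, j}`. -/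
def mu {α : Type*} (i j : α) : Setoid α := muSet {i, j}

/-- Transport of a partition along a permutation: `x ∼ y` in `w • I` iff
`w⁻¹ x ∼ w⁻¹ y` in `I`. -/
def permAct {β : Type*} (w : Equiv.Perm β) (I : Setoid β) : Setoid β :=
  Setoid.comap w.symm I

/-- `|i - j| = 1` for indices. -/
def adjIdx {m : ℕ} (i j : Fin m) : Prop := i.1 + 1 = j.1 ∨ j.1 + 1 = i.1

/-- `|i - j| ≥ 2` for indices. -/
def farIdx {m : ℕ} (i j : Fin m) : Prop := i.1 + 2 ≤ j.1 ∨ j.1 + 2 ≤ i.1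

/-- The element `i` of `Fin n` corresponding to `i : Fin (n-1)`. -/
def lo {n : ℕ} (i : Fin (n - 1)) : Fin n := ⟨i.1, by have := i.isLt; omega⟩

/-- The element `i + 1` of `Fin n` corresponding to `i : Fin (n-1)`. -/
def hi {n : ℕ} (i : Fin (n - 1)) : Fin n := ⟨i.1 + 1, by have := i.isLt; omega⟩

/-- Generators `σ_i` and `ν_i` of the virtual braid group. -/
inductive VGen (n : ℕ) : Type
  | σ (i : Fin (n - 1)) : VGen n
  | ν (i : Fin (n - 1)) : VGen n

open FreeGroup in
/-- The relators of the virtual braid group `VBₙ`. -/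
inductive VRelator (n : ℕ) : FreeGroup (VGen n) → Prop
  /-- `σᵢσⱼσᵢ = σⱼσᵢσⱼ` for `|i-j| = 1`. -/
  | braidσ (i j : Fin (n - 1)) (h : adjIdx i j) :
      VRelator n (of (.σ i) * of (.σ j) * of (.σ i) * (of (.σ j) * of (.σ i) * of (.σ j))⁻¹)
  /-- `νᵢνⱼνᵢ = νⱼνᵢνⱼ` for `|i-j| = 1`. -/
  | braidν (i j : Fin (n - 1)) (h : adjIdx i j) :
      VRelator n (of (.ν i) * of (.ν j) * of (.ν i) * (of (.ν j) * of (.ν i) * of (.ν j))⁻¹)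
  /-- `σᵢσⱼ = σⱼσᵢ` for `|i-j| ≥ 2`. -/
  | commσσ (i j : Fin (n - 1)) (h : farIdx i j) :
      VRelator n (of (.σ i) * of (.σ j) * (of (.σ j) * of (.σ i))⁻¹)
  /-- `νᵢνⱼ = νⱼνᵢ` for `|i-j| ≥ 2`. -/
  | commνν (i j : Fin (n - 1)) (h : farIdx i j) :
      VRelator n (of (.ν i) * of (.ν j) * (of (.ν j) * of (.ν i))⁻¹)
  /-- `σᵢνⱼ = νⱼσᵢ` for `|i-j| ≥ 2`. -/
  | commσν (i j : Fin (n - 1)) (h : farIdx i j) :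
      VRelator n (of (.σ i) * of (.ν j) * (of (.ν j) * of (.σ i))⁻¹)
  /-- `νᵢ² = 1`. -/
  | invol (i : Fin (n - 1)) : VRelator n (of (.ν i) * of (.ν i))
  /-- `σᵢνⱼνᵢ = νⱼνᵢσⱼ` for `|i-j| = 1`. -/
  | mixed (i j : Fin (n - 1)) (h : adjIdx i j) :
      VRelator n (of (.σ i) * of (.ν j) * of (.ν i) * (of (.ν j) * of (.ν i) * of (.σ j))⁻¹)

/-- The virtual braid group `VBₙ`. -/
abbrev VirtualBraidGroup (n : ℕ) := PresentedGroup {x | VRelator n x}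

/-- Generators `s_i`, `s_i'` (formal inverses), `v_i` and `e_i` of the tied virtual
braid monoid. -/
inductive TVGen (n : ℕ) : Type
  | s (i : Fin (n - 1)) : TVGen n
  | s' (i : Fin (n - 1)) : TVGen n
  | v (i : Fin (n - 1)) : TVGen n
  | e (i : Fin (n - 1)) : TVGen n

open FreeMonoid in
/-- The defining relations of the tied virtual braid monoid `TVBₙ`. -/
inductive TVRel (n : ℕ) : FreeMonoid (TVGen n) → FreeMonoid (TVGen n) → Prop
  /-- (B0) `s_i s_i' = 1`. -/
  | B0a (i : Fin (n - 1)) : TVRel n (of (.s i) * of (.s' i)) 1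
  /-- (B0) `s_i' s_i = 1`. -/
  | B0b (i : Fin (n - 1)) : TVRel n (of (.s' i) * of (.s i)) 1
  /-- `s_i s_j s_i = s_j s_i s_j` for `|i-j| = 1`. -/
  | B1 (i j : Fin (n - 1)) (h : adjIdx i j) :
      TVRel n (of (.s i) * of (.s j) * of (.s i)) (of (.s j) * of (.s i) * of (.s j))
  /-- `v_i v_j v_i = v_j v_i v_j` for `|i-j| = 1`. -/
  | V2 (i j : Fin (n - 1)) (h : adjIdx i j) :
      TVRel n (of (.v i) * of (.v j) * of (.v i)) (of (.v j) * of (.v i) * of (.v j))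
  /-- `s_i s_j = s_j s_i` for `|i-j| ≥ 2`. -/
  | B2 (i j : Fin (n - 1)) (h : farIdx i j) :
      TVRel n (of (.s i) * of (.s j)) (of (.s j) * of (.s i))
  /-- `v_i v_j = v_j v_i` for `|i-j| ≥ 2`. -/
  | V3 (i j : Fin (n - 1)) (h : farIdx i j) :
      TVRel n (of (.v i) * of (.v j)) (of (.v j) * of (.v i))
  /-- `s_i v_j = v_j s_i` for `|i-j| ≥ 2`. -/
  | V5 (i j : Fin (n - 1)) (h : farIdx i j) :
      TVRel n (of (.s i) * of (.v j)) (of (.v j) * of (.s i))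
  /-- `v_i² = 1`. -/
  | V1 (i : Fin (n - 1)) : TVRel n (of (.v i) * of (.v i)) 1
  /-- `s_i v_j v_i = v_j v_i s_j` for `|i-j| = 1`. -/
  | V4 (i j : Fin (n - 1)) (h : adjIdx i j) :
      TVRel n (of (.s i) * of (.v j) * of (.v i)) (of (.v j) * of (.v i) * of (.s j))
  /-- (T1) `e_i e_i = e_i`. -/
  | T1 (i : Fin (n - 1)) : TVRel n (of (.e i) * of (.e i)) (of (.e i))
  /-- (T2) `e_i e_j = e_j e_i`. -/
  | T2 (i j : Fin (n - 1)) : TVRel n (of (.e i) * of (.e j)) (of (.e j) * of (.e i))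
  /-- (T3) `e_i s_j s_i = s_j s_i e_j` for `|i-j| = 1`. -/
  | T3 (i j : Fin (n - 1)) (h : adjIdx i j) :
      TVRel n (of (.e i) * of (.s j) * of (.s i)) (of (.s j) * of (.s i) * of (.e j))
  /-- (T4) `s_i e_j = e_j s_i` for `|i-j| ≠ 1`. -/
  | T4 (i j : Fin (n - 1)) (h : ¬ adjIdx i j) :
      TVRel n (of (.s i) * of (.e j)) (of (.e j) * of (.s i))
  /-- (T5) `e_i e_j s_i = e_j s_i e_j` for `|i-j| = 1`. -/
  | T5a (i j : Fin (n - 1)) (h : adjIdx i j) :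
      TVRel n (of (.e i) * of (.e j) * of (.s i)) (of (.e j) * of (.s i) * of (.e j))
  /-- (T5) `e_j s_i e_j = s_i e_i e_j` for `|i-j| = 1`. -/
  | T5b (i j : Fin (n - 1)) (h : adjIdx i j) :
      TVRel n (of (.e j) * of (.s i) * of (.e j)) (of (.s i) * of (.e i) * of (.e j))
  /-- (TV1) `e_i v_j v_i = v_j v_i e_j` for `|i-j| = 1`. -/
  | TV1 (i j : Fin (n - 1)) (h : adjIdx i j) :
      TVRel n (of (.e i) * of (.v j) * of (.v i)) (of (.v j) * of (.v i) * of (.e j))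
  /-- (TV2) `e_i v_j s_i = v_j s_i e_j` for `|i-j| = 1`. -/
  | TV2 (i j : Fin (n - 1)) (h : adjIdx i j) :
      TVRel n (of (.e i) * of (.v j) * of (.s i)) (of (.v j) * of (.s i) * of (.e j))
  /-- (TV3) `e_i s_j v_i = s_j v_i e_j` for `|i-j| = 1`. -/
  | TV3 (i j : Fin (n - 1)) (h : adjIdx i j) :
      TVRel n (of (.e i) * of (.s j) * of (.v i)) (of (.s j) * of (.v i) * of (.e j))
  /-- (TV4) `v_i e_j = s_i e_j s_i' v_i` for `|i-j| = 1`. -/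
  | TV4 (i j : Fin (n - 1)) (h : adjIdx i j) :
      TVRel n (of (.v i) * of (.e j)) (of (.s i) * of (.e j) * of (.s' i) * of (.v i))
  /-- (TV5) `e_i v_j = v_j e_i` for `|i-j| ≠ 1`. -/
  | TV5 (i j : Fin (n - 1)) (h : ¬ adjIdx i j) :
      TVRel n (of (.e i) * of (.v j)) (of (.v j) * of (.e i))
  /-- (TV6) `e_i e_j v_i = e_j v_i e_j` for `|i-j| = 1`. -/
  | TV6a (i j : Fin (n - 1)) (h : adjIdx i j) :
      TVRel n (of (.e i) * of (.e j) * of (.v i)) (of (.e j) * of (.v i) * of (.e j))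
  /-- (TV6) `e_j v_i e_j = v_i e_i e_j` for `|i-j| = 1`. -/
  | TV6b (i j : Fin (n - 1)) (h : adjIdx i j) :
      TVRel n (of (.e j) * of (.v i) * of (.e j)) (of (.v i) * of (.e i) * of (.e j))

/-!
The virtual braid group acts on the tied virtual braid monoid by conjugation. Conjugating the
generators `e i` yields a tie `t a b` for every pair of strands, and the relations (T4), (TV1) and
(TV3)–(TV5), with those of the group, give the equivariance `g • t a b = t (π g a) (π g b)`. As `π`
is surjective, equivariance spreads (T1), (T2) and (TV6) from neighbouring strands to all pairs: the
ties commute, are idempotent and satisfy `t a b * t b c = t a b * t a c`. These are the relations of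
the partitions `mu a b`, so `mu a b ↦ t a b` extends to a homomorphism on all partitions. By
equivariance it combines with `σ i ↦ s i`, `ν i ↦ v i` into a homomorphism from the semidirect
product, inverse to the one that sends `e i` to `mu (lo i) (hi i)`.
-/

section Partitions

variable {α : Type*}

theorem mu_le_iff {a b : α} {I : Setoid α} : mu a b ≤ I ↔ I a b := by
  refine ⟨fun h => h (Relation.EqvGen.rel a b (by simp)), fun h => Setoid.eqvGen_le ?_⟩
  rintro _ _ ⟨rfl | rfl, rfl | rfl⟩
  exacts [I.refl _, h, I.symm h, I.refl _]

theorem mu_self (a : α) : mu a a = ⊥ :=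
  eq_bot_iff.2 (mu_le_iff.2 rfl)

theorem mu_comm (a b : α) : mu a b = mu b a :=
  congrArg muSet (Set.pair_comm a b)

theorem mu_mul_mu_triangle (a b c : α) : mu a b * mu b c = mu a b * mu a c := by
  change mu a b ⊔ mu b c = mu a b ⊔ mu a c
  refine eq_of_forall_ge_iff fun I => ?_
  simp only [sup_le_iff, mu_le_iff]
  exact and_congr_right fun h => ⟨I.trans h, I.trans (I.symm h)⟩

theorem permAct_apply {w : Equiv.Perm α} {I : Setoid α} {a b : α} :
    permAct w I a b ↔ I (w⁻¹ a) (w⁻¹ b) := Iff.rfl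

/-- Transport along a permutation, as an automorphism of the partition lattice. -/
def permActIso (w : Equiv.Perm α) : Setoid α ≃o Setoid α where
  toFun := permAct w
  invFun := permAct w⁻¹
  left_inv I := Setoid.ext fun a b => by simp [permAct_apply]
  right_inv I := Setoid.ext fun a b => by simp [permAct_apply]
  map_rel_iff' {I J} := by
    refine ⟨fun h a b hab => ?_, fun h _ _ hab => h hab⟩
    have hwab : permAct w I (w a) (w b) := by simpa [permAct_apply] using hab
    simpa [permAct_apply] using h hwab

/-- The action of permutations on the monoid of partitions. -/
def partitionAction (α : Type*) : Equiv.Perm α →* Monoid.End (Setoid α) where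
  toFun w :=
    { toFun := permAct w
      map_one' := (permActIso w).map_bot
      map_mul' := (permActIso w).map_sup }
  map_one' := rfl
  map_mul' _ _ := rfl

theorem permAct_mu (w : Equiv.Perm α) (a b : α) : permAct w (mu a b) = mu (w a) (w b) :=
  eq_of_forall_ge_iff fun I => by
    have hI : mu a b ≤ (permActIso w).symm I ↔ I (w a) (w b) := mu_le_iff
    exact (permActIso w).le_symm_apply.symm.trans (hI.trans mu_le_iff.symm)

theorem permAct_swap_mu [DecidableEq α] {a b c : α} (hac : a ≠ c) (hbc : b ≠ c) :
    permAct (Equiv.swap a b) (mu b c) = mu a c := by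
  rw [permAct_mu, Equiv.swap_apply_right, Equiv.swap_apply_of_ne_of_ne hac.symm hbc.symm]

theorem closure_range_mu [Finite α] :
    Submonoid.closure (Set.range fun p : α × α => mu p.1 p.2) = ⊤ := by
  classical
  cases nonempty_fintype α
  refine eq_top_iff.2 fun I _ => ?_
  have hI : I = ({p | I p.1 p.2} : Finset (α × α)).sup fun p => mu p.1 p.2 :=
    eq_of_forall_ge_iff fun J => by
      simp only [Finset.sup_le_iff, Finset.mem_filter_univ, mu_le_iff, Prod.forall]
      rfl
  rw [hI]
  exact Finset.sup_induction (one_mem _) (fun _ hJ _ hK => mul_mem hJ hK)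
    fun p _ => Submonoid.subset_closure ⟨p, rfl⟩

theorem partition_hom_ext [Finite α] {M : Type*} [Monoid M] {f g : Setoid α →* M}
    (h : ∀ a b, f (mu a b) = g (mu a b)) : f = g :=
  MonoidHom.eq_of_eqOn_denseM closure_range_mu (by rintro _ ⟨p, rfl⟩; exact h p.1 p.2)

end Partitions

section TieFamilies

variable {α M : Type*} [Monoid M]

/-- A family of elements satisfying the relations of the partitions `mu a b`. By `idem` below the
`f a b` are idempotent, so these relations present the monoid of partitions of a finite set. -/
structure IsTieFamily (f : α → α → M) : Prop where
  self a : f a a = 1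
  symm a b : f a b = f b a
  commute a b c d : Commute (f a b) (f c d)
  triangle a b c : f a b * f b c = f a b * f a c

theorem isTieFamily_mu : IsTieFamily (mu : α → α → Setoid α) where
  self := mu_self
  symm := mu_comm
  commute _ _ _ _ := Commute.all _ _
  triangle := mu_mul_mu_triangle

namespace IsTieFamily

variable {f : α → α → M} (hf : IsTieFamily f)

include hf in
theorem idem (a b : α) : f a b * f a b = f a b := by
  rw [← hf.triangle, hf.self, mul_one]

/-- The partition of `α` whose related pairs are the `a, b` with `f a b * p = p`. -/
def absorbed (p : M) : Setoid α where
  r a b := f a b * p = p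
  iseqv.refl a := by rw [hf.self, one_mul]
  iseqv.symm {a b} h := by rwa [← hf.symm]
  iseqv.trans {a b c} hab hbc := by
    rw [← hab, ← mul_assoc, (hf.commute a c a b).eq, ← hf.triangle, mul_assoc, hbc]

variable [Finite α]

/-- The product of the `f a b` over all pairs of `I`-related points. -/
noncomputable def prod (I : Setoid α) : M :=
  (Set.toFinite {p : α × α | I p.1 p.2}).toFinset.noncommProd (fun p => f p.1 p.2)
    fun p _ q _ _ => hf.commute p.1 p.2 q.1 q.2

theorem commute_prod {x : M} (hx : ∀ a b, Commute x (f a b)) (I : Setoid α) :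
    Commute x (hf.prod I) :=
  Finset.noncommProd_commute _ _ _ _ fun p _ => hx p.1 p.2

theorem mul_prod_of_rel {I : Setoid α} {a b : α} (h : I a b) :
    f a b * hf.prod I = hf.prod I := by
  classical
  have hab : (a, b) ∈ (Set.toFinite {p : α × α | I p.1 p.2}).toFinset := by simpa using h
  have hprod := Finset.mul_noncommProd_erase _ hab (fun p => f p.1 p.2)
    fun p _ q _ _ => hf.commute p.1 p.2 q.1 q.2
  unfold prod
  rw [← hprod, ← mul_assoc, hf.idem]

theorem prod_mul_of_le_absorbed {I : Setoid α} {p : M} (h : I ≤ hf.absorbed p) :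
    hf.prod I * p = p := by
  refine Finset.noncommProd_induction _ _ _ (fun q => q * p = p) (fun q r hq hr => ?_)
    (one_mul p) fun x hx => h (by simpa using hx)
  rw [mul_assoc, hr, hq]

theorem prod_eq {I : Setoid α} {p : M} (hp : ∀ a b, Commute p (f a b)) (hI : I ≤ hf.absorbed p)
    (hpI : p * hf.prod I = hf.prod I) : hf.prod I = p := by
  rw [← hpI, (hf.commute_prod hp I).eq, hf.prod_mul_of_le_absorbed hI]

theorem prod_sup (I J : Setoid α) : hf.prod (I ⊔ J) = hf.prod I * hf.prod J := by
  have hc (K : Setoid α) (a b : α) : Commute (f a b) (hf.prod K) :=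
    hf.commute_prod (hf.commute a b) K
  have absorb_of_le {K : Setoid α} (hK : K ≤ I ⊔ J) :
      hf.prod K * hf.prod (I ⊔ J) = hf.prod (I ⊔ J) :=
    hf.prod_mul_of_le_absorbed fun _ _ h => hf.mul_prod_of_rel (hK h)
  refine hf.prod_eq (fun a b => ((hc I a b).mul_right (hc J a b)).symm)
    (sup_le (fun a b h => ?_) fun a b h => ?_) ?_
  · change f a b * (_ * _) = _
    rw [← mul_assoc, hf.mul_prod_of_rel h]
  · change f a b * (_ * _) = _
    rw [(hc I a b).left_comm, hf.mul_prod_of_rel h]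
  · rw [mul_assoc, absorb_of_le le_sup_right, absorb_of_le le_sup_left]

/-- The homomorphism from the monoid of partitions determined by a tie family. -/
noncomputable def toHom : Setoid α →* M where
  toFun := hf.prod
  map_one' := hf.prod_eq (fun _ _ => Commute.one_left _) bot_le (one_mul _)
  map_mul' := hf.prod_sup

theorem toHom_mu (a b : α) : hf.toHom (mu a b) = f a b :=
  hf.prod_eq (hf.commute a b) (mu_le_iff.2 (hf.idem a b)) (hf.mul_prod_of_rel (mu_le_iff.1 le_rfl))

end IsTieFamily

end TieFamilies

section MonoidSemidirectProduct

/-- The semidirect product of a monoid `N` and a monoid `G` acting on it by endomorphisms.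
Mathlib's `SemidirectProduct` is restricted to groups. -/
@[ext]
structure MonoidSemidirectProduct {N G : Type*} [Monoid N] [Monoid G] (φ : G →* Monoid.End N) where
  left : N
  right : G

namespace MonoidSemidirectProduct

variable {N G M : Type*} [Monoid N] [Monoid G] [Monoid M] {φ : G →* Monoid.End N}

instance : Monoid (MonoidSemidirectProduct φ) where
  mul x y := ⟨x.left * φ x.right y.left, x.right * y.right⟩
  one := ⟨1, 1⟩
  mul_assoc x y z := MonoidSemidirectProduct.ext
    (by
      change x.left * φ x.right y.left * φ (x.right * y.right) z.left =
        x.left * φ x.right (y.left * φ y.right z.left)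
      rw [map_mul, map_mul, mul_assoc]
      rfl)
    (mul_assoc x.right y.right z.right)
  one_mul x := MonoidSemidirectProduct.ext
    (by change 1 * φ 1 x.left = x.left; rw [map_one, one_mul]; rfl) (one_mul x.right)
  mul_one x := MonoidSemidirectProduct.ext
    (by change x.left * φ x.right 1 = x.left; rw [map_one, mul_one]) (mul_one x.right)

theorem mul_left (x y : MonoidSemidirectProduct φ) :
    (x * y).left = x.left * φ x.right y.left := rfl

theorem mul_right (x y : MonoidSemidirectProduct φ) : (x * y).right = x.right * y.right := rfl

theorem one_left : (1 : MonoidSemidirectProduct φ).left = 1 := rfl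

theorem one_right : (1 : MonoidSemidirectProduct φ).right = 1 := rfl

/-- The underlying pair of an element of a semidirect product. -/
def equivProd : MonoidSemidirectProduct φ ≃ N × G where
  toFun x := (x.left, x.right)
  invFun x := ⟨x.1, x.2⟩

/-- The inclusion of the normal factor. -/
def inl : N →* MonoidSemidirectProduct φ where
  toFun n := ⟨n, 1⟩
  map_one' := rfl
  map_mul' m n := MonoidSemidirectProduct.ext (by simp [mul_left]) (mul_one 1).symm

/-- The inclusion of the acting factor. -/
def inr : G →* MonoidSemidirectProduct φ where
  toFun g := ⟨1, g⟩
  map_one' := rfl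
  map_mul' g h := MonoidSemidirectProduct.ext (by simp [mul_left]) rfl

theorem inl_mul_inr (n : N) (g : G) : inl n * inr g = (⟨n, g⟩ : MonoidSemidirectProduct φ) :=
  MonoidSemidirectProduct.ext (by simp [mul_left, inl, inr]) (one_mul g)

theorem inr_mul_inl (n : N) (g : G) :
    (inr g * inl n : MonoidSemidirectProduct φ) = inl (φ g n) * inr g :=
  MonoidSemidirectProduct.ext (by simp [mul_left, inl, inr]) (by simp [mul_right, inl, inr])

theorem hom_ext {f g : MonoidSemidirectProduct φ →* M} (hl : f.comp inl = g.comp inl)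
    (hr : f.comp inr = g.comp inr) : f = g := by
  ext x
  change f ⟨x.left, x.right⟩ = g ⟨x.left, x.right⟩
  rw [← inl_mul_inr, map_mul, map_mul]
  exact congrArg₂ (· * ·) (DFunLike.congr_fun hl x.left) (DFunLike.congr_fun hr x.right)

/-- The homomorphism from a semidirect product given by homomorphisms from its factors that satisfy
its commutation rule. -/
def lift (f : N →* M) (h : G →* M) (hc : ∀ g n, h g * f n = f (φ g n) * h g) :
    MonoidSemidirectProduct φ →* M where
  toFun x := f x.left * h x.right
  map_one' := by simp [one_left, one_right]
  map_mul' x y := by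
    rw [mul_left, mul_right, map_mul, map_mul, mul_assoc, ← mul_assoc (f _) (h _), ← hc]
    simp only [mul_assoc]

theorem lift_inl (f : N →* M) (h : G →* M) (hc : ∀ g n, h g * f n = f (φ g n) * h g) (n : N) :
    lift f h hc (inl n) = f n :=
  (congrArg (f n * ·) (map_one h)).trans (mul_one _)

theorem lift_inr (f : N →* M) (h : G →* M) (hc : ∀ g n, h g * f n = f (φ g n) * h g) (g : G) :
    lift f h hc (inr g) = h g :=
  (congrArg (· * h g) (map_one f)).trans (one_mul _)

end MonoidSemidirectProduct

end MonoidSemidirectProduct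

section ConjugateTies

variable {G M : Type*} [Group G] [Monoid M] [MulDistribMulAction G M]

/-- The arc `v (a + d) • ⋯ • v (a + 1) • e a`, which will tie `a` to `a + d + 1`. -/
def arc (v : ℕ → G) (e : ℕ → M) (a : ℕ) : ℕ → M
  | 0 => e a
  | d + 1 => v (a + d + 1) • arc v e a d

/-- The tie between any two points, built from the ties `e a` of neighbours `a`, `a + 1`. -/
def tie (v : ℕ → G) (e : ℕ → M) (a b : ℕ) : M :=
  if a < b then arc v e a (b - a - 1) else if b < a then arc v e b (a - b - 1) else 1

section

variable (v : ℕ → G) (e : ℕ → M)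

theorem tie_self (a : ℕ) : tie v e a a = 1 := by
  simp [tie]

theorem tie_comm (a b : ℕ) : tie v e a b = tie v e b a := by
  unfold tie
  split_ifs <;> first | rfl | omega

theorem tie_succ (a : ℕ) : tie v e a (a + 1) = e a := by
  simp [tie, arc]

theorem tie_succ_right {a b : ℕ} (h : a < b) : tie v e a (b + 1) = v b • tie v e a b := by
  obtain ⟨d, rfl⟩ := Nat.exists_eq_add_of_lt h
  rw [tie, tie, if_pos (by omega), if_pos h, show a + d + 1 + 1 - a - 1 = d + 1 by omega,
    show a + d + 1 - a - 1 = d by omega, arc]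

end

/-- The elements `t i` (`i < m`) act on the neighbouring ties `e j` and on the `v j` the way the
transpositions `(i, i + 1)` of the points `0, …, m` should. -/
structure ActsAsTranspositions (m : ℕ) (v : ℕ → G) (e : ℕ → M) (t : ℕ → G) : Prop where
  mul_comm {i j : ℕ} (hi : i < m) (hj : j < m) (h : i + 1 < j ∨ j + 1 < i) :
    t i * v j = v j * t i
  mul_mul {i j : ℕ} (hi : i < m) (hj : j < m) (h : i + 1 = j ∨ j + 1 = i) :
    t i * v j * v i = v j * v i * t j
  smul_of_not_adj {i j : ℕ} (hi : i < m) (hj : j < m) (h : ¬(i + 1 = j ∨ j + 1 = i)) :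
    t i • e j = e j
  smul_of_adj {i j : ℕ} (hi : i < m) (hj : j < m) (h : i + 1 = j ∨ j + 1 = i) :
    t i • e j = v i • e j
  smul_smul {i j : ℕ} (hi : i < m) (hj : j < m) (h : i + 1 = j ∨ j + 1 = i) :
    t i • v j • e i = e j

namespace ActsAsTranspositions

variable {m : ℕ} {v t : ℕ → G} {e : ℕ → M}
  (hv : ActsAsTranspositions m v e v) (hinv : ∀ i < m, v i * v i = 1)
  (ht : ActsAsTranspositions m v e t)

section
include hv hinv

theorem smul_flip {i j : ℕ} (hi : i < m) (hj : j < m) (h : i + 1 = j ∨ j + 1 = i) :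
    v j • e i = v i • e j := by
  rw [← hv.smul_smul hi hj h, ← mul_smul, hinv i hi, one_smul]

theorem tie_succ_left {a b : ℕ} (hab : a + 1 < b) (hb : b ≤ m) :
    tie v e a b = v a • tie v e (a + 1) b := by
  induction b, hab using Nat.le_induction with
  | base =>
    rw [tie_succ_right v e a.lt_succ_self, tie_succ, tie_succ,
      hv.smul_flip hinv (by omega) (by omega) (Or.inl rfl)]
  | succ b hab ih =>
    rw [tie_succ_right v e (by omega), tie_succ_right v e (by omega), ih (by omega),
      ← mul_smul, ← mul_smul, hv.mul_comm (by omega) (by omega) (by omega)]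

include ht

theorem smul_smul_self {i j : ℕ} (hi : i < m) (hj : j < m) (h : i + 1 = j ∨ j + 1 = i) :
    t i • v i • e j = e j := by
  rw [← hv.smul_flip hinv hi hj h, ht.smul_smul hi hj h]

theorem smul_e {k a : ℕ} (hk : k < m) (ha : a < m) :
    t k • e a = tie v e (Equiv.swap k (k + 1) a) (Equiv.swap k (k + 1) (a + 1)) := by
  rcases eq_or_ne k a with rfl | hka
  · rw [Equiv.swap_apply_left, Equiv.swap_apply_right, tie_comm, tie_succ,
      ht.smul_of_not_adj hk ha (by omega)]
  rcases eq_or_ne k (a + 1) with rfl | hka'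
  · rw [Equiv.swap_apply_left, Equiv.swap_apply_of_ne_of_ne (by omega) (by omega),
      tie_succ_right v e (by omega), tie_succ, ht.smul_of_adj hk ha (by omega)]
  rcases eq_or_ne a (k + 1) with rfl | hak
  · rw [Equiv.swap_apply_right, Equiv.swap_apply_of_ne_of_ne (by omega) (by omega),
      hv.tie_succ_left hinv (by omega) (by omega), tie_succ, ht.smul_of_adj hk ha (by omega)]
  · rw [Equiv.swap_apply_of_ne_of_ne hka.symm hak,
      Equiv.swap_apply_of_ne_of_ne (by omega) (by omega), tie_succ,
      ht.smul_of_not_adj hk ha (by omega)]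

theorem smul_tie_add_two {k a : ℕ} (hk : k = a ∨ k = a + 1) (ha : a + 2 ≤ m) :
    t k • tie v e a (a + 2) =
      tie v e (Equiv.swap k (k + 1) a) (Equiv.swap k (k + 1) (a + 2)) := by
  rw [tie_succ_right v e a.lt_succ_self, tie_succ]
  rcases hk with rfl | rfl
  · rw [Equiv.swap_apply_left, Equiv.swap_apply_of_ne_of_ne (by omega) (by omega), tie_succ,
      ht.smul_smul (by omega) (by omega) (Or.inl rfl)]
  · rw [Equiv.swap_apply_right, Equiv.swap_apply_of_ne_of_ne (by omega) (by omega), tie_succ,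
      hv.smul_smul_self hinv ht (by omega) (by omega) (Or.inr rfl)]

theorem smul_tie_of_left {k a b : ℕ} (hka : k + 1 < a ∨ a + 1 < k) (hab : a + 1 < b) (hk : k < m)
    (hb : b ≤ m) (ih : t k • tie v e (a + 1) b =
      tie v e (Equiv.swap k (k + 1) (a + 1)) (Equiv.swap k (k + 1) b)) :
    t k • tie v e a b = tie v e (Equiv.swap k (k + 1) a) (Equiv.swap k (k + 1) b) := by
  have hswap : a + 1 < Equiv.swap k (k + 1) b ∧ Equiv.swap k (k + 1) b ≤ m := by
    rw [Equiv.swap_apply_def]; split_ifs <;> omega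
  rw [hv.tie_succ_left hinv hab hb, ← mul_smul, ht.mul_comm hk (by omega) (by omega), mul_smul, ih,
    Equiv.swap_apply_of_ne_of_ne (a := k) (x := a) (by omega) (by omega),
    Equiv.swap_apply_of_ne_of_ne (a := k) (x := a + 1) (by omega) (by omega),
    ← hv.tie_succ_left hinv hswap.1 hswap.2]

end

section
include ht

theorem smul_tie_of_right {k a b : ℕ} (hkb : k + 1 < b ∨ b + 1 < k) (hab : a < b) (hk : k < m)
    (hb : b < m) (ih : t k • tie v e a b =
      tie v e (Equiv.swap k (k + 1) a) (Equiv.swap k (k + 1) b)) :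
    t k • tie v e a (b + 1) =
      tie v e (Equiv.swap k (k + 1) a) (Equiv.swap k (k + 1) (b + 1)) := by
  have hswap : Equiv.swap k (k + 1) a < b := by
    rw [Equiv.swap_apply_def]; split_ifs <;> omega
  rw [tie_succ_right v e hab, ← mul_smul, ht.mul_comm hk hb (by omega), mul_smul, ih,
    Equiv.swap_apply_of_ne_of_ne (a := k) (x := b) (by omega) (by omega),
    Equiv.swap_apply_of_ne_of_ne (a := k) (x := b + 1) (by omega) (by omega),
    ← tie_succ_right v e hswap]

theorem smul_tie_add_three {a : ℕ} (ha : a + 3 ≤ m) :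
    t (a + 1) • tie v e a (a + 3) = tie v e a (a + 3) := by
  rw [tie_succ_right v e (by omega), tie_succ_right v e a.lt_succ_self, tie_succ, ← mul_smul,
    ← mul_smul, ht.mul_mul (by omega) (by omega) (Or.inl rfl), mul_smul,
    ht.smul_of_not_adj (by omega) (by omega) (by omega), mul_smul]

end

include hv hinv ht

theorem smul_tie_of_lt {k a b : ℕ} (hk : k < m) (hab : a < b) (hb : b ≤ m) :
    t k • tie v e a b = tie v e (Equiv.swap k (k + 1) a) (Equiv.swap k (k + 1) b) := by
  induction hd : b - a using Nat.strong_induction_on generalizing a b with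
  | h d ih =>
  obtain rfl | ⟨c, rfl, hac⟩ : b = a + 1 ∨ ∃ c, b = c + 1 ∧ a < c := by
    rcases b with _ | c
    · omega
    · by_cases h : a < c
      exacts [Or.inr ⟨c, rfl, h⟩, Or.inl (by omega)]
  · rw [tie_succ]
    exact hv.smul_e hinv ht hk (by omega)
  by_cases hkc : k + 1 < c ∨ c + 1 < k
  · exact ht.smul_tie_of_right hkc hac hk (by omega) (ih (c - a) (by omega) hac (by omega) rfl)
  by_cases hka : k + 1 < a ∨ a + 1 < k
  · exact hv.smul_tie_of_left hinv ht hka (by omega) hk hb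
      (ih (c - a) (by omega) (by omega) hb (by omega))
  obtain rfl | ⟨rfl, rfl⟩ : c = a + 1 ∨ c = a + 2 ∧ k = a + 1 := by omega
  · exact hv.smul_tie_add_two hinv ht (by omega) hb
  · rw [ht.smul_tie_add_three hb, Equiv.swap_apply_of_ne_of_ne (by omega) (by omega),
      Equiv.swap_apply_of_ne_of_ne (by omega) (by omega)]

theorem smul_tie {k a b : ℕ} (hk : k < m) (ha : a ≤ m) (hb : b ≤ m) :
    t k • tie v e a b = tie v e (Equiv.swap k (k + 1) a) (Equiv.swap k (k + 1) b) := by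
  rcases lt_trichotomy a b with hab | rfl | hba
  · exact hv.smul_tie_of_lt hinv ht hk hab hb
  · rw [tie_self, tie_self, smul_one]
  · rw [tie_comm, hv.smul_tie_of_lt hinv ht hk hba ha, tie_comm]

end ActsAsTranspositions

end ConjugateTies

section UnitsConj

variable (M : Type*) [Monoid M]

/-- The action of the units of a monoid by conjugation. -/
def unitsConj : Mˣ →* MulAut M :=
  (MulDistribMulAction.toMulAut (ConjAct Mˣ) M).comp ConjAct.toConjAct.toMonoidHom

variable {M}

theorem unitsConj_apply_eq_iff {u : Mˣ} {x y : M} : unitsConj M u x = y ↔ u * x = y * u :=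
  u.mul_inv_eq_iff_eq_mul

end UnitsConj

section UnderlyingPermutation

variable {n : ℕ}

/-- The generators of the virtual braid group. -/
abbrev vb (x : VGen n) : VirtualBraidGroup n := PresentedGroup.of x

theorem vb_rel {x y : FreeGroup (VGen n)} (h : VRelator n (x * y⁻¹)) :
    PresentedGroup.mk {x | VRelator n x} x = PresentedGroup.mk _ y :=
  PresentedGroup.mk_eq_mk_of_mul_inv_mem h

/-- The homomorphism `π` sends `σ i` and `ν i` to the transposition `(i, i + 1)`. -/
structure IsUnderlyingPerm (π : VirtualBraidGroup n →* Equiv.Perm (Fin n)) : Prop where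
  map_σ (i : Fin (n - 1)) : π (vb (.σ i)) = Equiv.swap (lo i) (hi i)
  map_ν (i : Fin (n - 1)) : π (vb (.ν i)) = Equiv.swap (lo i) (hi i)

theorem mclosure_swap_lo_hi (n : ℕ) :
    Submonoid.closure (Set.range fun i : Fin (n - 1) => Equiv.swap (lo i) (hi i)) = ⊤ := by
  cases n with
  | zero => exact Subsingleton.elim _ _
  | succ m => exact Equiv.Perm.mclosure_swap_castSucc_succ m

theorem IsUnderlyingPerm.surjective {π : VirtualBraidGroup n →* Equiv.Perm (Fin n)}
    (hπ : IsUnderlyingPerm π) : Function.Surjective π := by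
  rw [← MonoidHom.mrange_eq_top, eq_top_iff, ← mclosure_swap_lo_hi, Submonoid.closure_le]
  rintro _ ⟨i, rfl⟩
  exact ⟨vb (.ν i), hπ.map_ν i⟩

theorem hi_eq_lo {i j : Fin (n - 1)} (h : i.1 + 1 = j.1) : hi i = lo j :=
  Fin.ext h

theorem exists_perm_castLE_eq_get {l : List (Fin n)} (hl : l.Nodup) :
    ∃ (h : l.length ≤ n) (w : Equiv.Perm (Fin n)), ∀ j, w (Fin.castLE h j) = l.get j := by
  have h : l.length ≤ n := by simpa using hl.length_le_card
  exact ⟨h, Equiv.Perm.exists_extending_pair _ _ (Fin.castLE_injective h) hl.injective_get⟩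

theorem exists_perm_lo_hi {a b : Fin n} (hab : a ≠ b) :
    ∃ (i : Fin (n - 1)) (w : Equiv.Perm (Fin n)), w (lo i) = a ∧ w (hi i) = b := by
  obtain ⟨h, w, hw⟩ := exists_perm_castLE_eq_get (l := [a, b]) (by simpa using hab)
  have h : 2 ≤ n := h
  exact ⟨⟨0, by omega⟩, w, hw (0 : Fin 2), hw (1 : Fin 2)⟩

theorem exists_perm_lo_hi_hi {a b c : Fin n} (habc : [a, b, c].Nodup) :
    ∃ (i j : Fin (n - 1)) (w : Equiv.Perm (Fin n)),
      i.1 + 1 = j.1 ∧ w (lo i) = a ∧ w (hi i) = b ∧ w (hi j) = c := by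
  obtain ⟨h, w, hw⟩ := exists_perm_castLE_eq_get habc
  have h : 3 ≤ n := h
  exact ⟨⟨0, by omega⟩, ⟨1, by omega⟩, w, rfl, hw (0 : Fin 3), hw (1 : Fin 3), hw (2 : Fin 3)⟩

theorem exists_perm_lo_hi_lo_hi {a b c d : Fin n} (habcd : [a, b, c, d].Nodup) :
    ∃ (i j : Fin (n - 1)) (w : Equiv.Perm (Fin n)),
      w (lo i) = a ∧ w (hi i) = b ∧ w (lo j) = c ∧ w (hi j) = d := by
  obtain ⟨h, w, hw⟩ := exists_perm_castLE_eq_get habcd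
  have h : 4 ≤ n := h
  exact ⟨⟨0, by omega⟩, ⟨2, by omega⟩, w, hw (0 : Fin 4), hw (1 : Fin 4), hw (2 : Fin 4),
    hw (3 : Fin 4)⟩

end UnderlyingPermutation

section TiedVirtualBraidMonoid

variable {n : ℕ}

/-- The generators of the tied virtual braid monoid. -/
abbrev tvb (x : TVGen n) : PresentedMonoid (TVRel n) := PresentedMonoid.of (TVRel n) x

/-- The units of the tied virtual braid monoid that correspond to the generators of the virtual
braid group. -/
def braidUnit : VGen n → (PresentedMonoid (TVRel n))ˣ
  | .σ i =>
    { val := tvb (.s i)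
      inv := tvb (.s' i)
      val_inv := PresentedMonoid.mk_eq_mk_of_rel (.B0a i)
      inv_val := PresentedMonoid.mk_eq_mk_of_rel (.B0b i) }
  | .ν i =>
    { val := tvb (.v i)
      inv := tvb (.v i)
      val_inv := PresentedMonoid.mk_eq_mk_of_rel (.V1 i)
      inv_val := PresentedMonoid.mk_eq_mk_of_rel (.V1 i) }

/-- The virtual braid group, mapped to the units of the tied virtual braid monoid. -/
def braidUnits (n : ℕ) : VirtualBraidGroup n →* (PresentedMonoid (TVRel n))ˣ :=
  PresentedGroup.toGroup (f := braidUnit) <| by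
    rintro _ (⟨i, j, h⟩ | ⟨i, j, h⟩ | ⟨i, j, h⟩ | ⟨i, j, h⟩ | ⟨i, j, h⟩ | ⟨i⟩ | ⟨i, j, h⟩) <;>
      simp only [map_mul, map_inv, FreeGroup.lift_apply_of, mul_inv_eq_one] <;>
      apply Units.ext
    · exact PresentedMonoid.mk_eq_mk_of_rel (.B1 i j h)
    · exact PresentedMonoid.mk_eq_mk_of_rel (.V2 i j h)
    · exact PresentedMonoid.mk_eq_mk_of_rel (.B2 i j h)
    · exact PresentedMonoid.mk_eq_mk_of_rel (.V3 i j h)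
    · exact PresentedMonoid.mk_eq_mk_of_rel (.V5 i j h)
    · exact PresentedMonoid.mk_eq_mk_of_rel (.V1 i)
    · exact PresentedMonoid.mk_eq_mk_of_rel (.V4 i j h)

/-- The action of the virtual braid group on the tied virtual braid monoid by conjugation. -/
def braidConj (n : ℕ) : VirtualBraidGroup n →* MulAut (PresentedMonoid (TVRel n)) :=
  (unitsConj _).comp (braidUnits n)

theorem braidConj_apply_eq_iff {g : VirtualBraidGroup n} {x y : PresentedMonoid (TVRel n)} :
    braidConj n g x = y ↔ braidUnits n g * x = y * braidUnits n g :=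
  unitsConj_apply_eq_iff

theorem braidConj_σ_apply_eq_iff {i : Fin (n - 1)} {x y : PresentedMonoid (TVRel n)} :
    braidConj n (vb (.σ i)) x = y ↔ tvb (.s i) * x = y * tvb (.s i) :=
  braidConj_apply_eq_iff

theorem braidConj_ν_apply_eq_iff {i : Fin (n - 1)} {x y : PresentedMonoid (TVRel n)} :
    braidConj n (vb (.ν i)) x = y ↔ tvb (.v i) * x = y * tvb (.v i) :=
  braidConj_apply_eq_iff

/-- Conjugation by the generators `x i`, with the index extended to the natural numbers. -/
noncomputable def conjFamily (n : ℕ) (x : Fin (n - 1) → VGen n) :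
    ℕ → MulAut (PresentedMonoid (TVRel n)) :=
  Function.extend Fin.val (fun i => braidConj n (vb (x i))) 1

/-- The generators `e i`, with the index extended to the natural numbers. -/
noncomputable def tieFamily (n : ℕ) : ℕ → PresentedMonoid (TVRel n) :=
  Function.extend Fin.val (fun i : Fin (n - 1) => tvb (.e i)) 1

theorem conjFamily_val (x : Fin (n - 1) → VGen n) (i : Fin (n - 1)) :
    conjFamily n x i = braidConj n (vb (x i)) :=
  Fin.val_injective.extend_apply _ _ _

theorem tieFamily_val (i : Fin (n - 1)) : tieFamily n i = tvb (.e i) :=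
  Fin.val_injective.extend_apply _ _ _

theorem conjFamily_ν_mul_self {k : ℕ} (hk : k < n - 1) :
    conjFamily n .ν k * conjFamily n .ν k = 1 := by
  lift k to Fin (n - 1) using hk
  have h : vb (.ν k) * vb (.ν k) = 1 := PresentedGroup.one_of_mem (VRelator.invol k)
  rw [conjFamily_val, ← map_mul, h, map_one]

theorem actsAsTranspositions_ν (n : ℕ) : ActsAsTranspositions (n - 1) (conjFamily n .ν)
    (tieFamily n) (conjFamily n .ν) where
  mul_comm {i j} hi hj h := by
    lift i to Fin (n - 1) using hi
    lift j to Fin (n - 1) using hj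
    simp only [conjFamily_val, ← map_mul]
    exact congrArg _ (vb_rel (.commνν i j h))
  mul_mul {i j} hi hj h := by
    lift i to Fin (n - 1) using hi
    lift j to Fin (n - 1) using hj
    simp only [conjFamily_val, ← map_mul]
    exact congrArg _ (vb_rel (.braidν i j h))
  smul_of_not_adj {i j} hi hj h := by
    lift i to Fin (n - 1) using hi
    lift j to Fin (n - 1) using hj
    rw [conjFamily_val, tieFamily_val]
    exact braidConj_ν_apply_eq_iff.2
      (PresentedMonoid.mk_eq_mk_of_rel (.TV5 j i (mt Or.symm h))).symm
  smul_of_adj _ _ _ := rfl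
  smul_smul {i j} hi hj h := by
    lift i to Fin (n - 1) using hi
    lift j to Fin (n - 1) using hj
    rw [conjFamily_val, conjFamily_val, tieFamily_val, tieFamily_val, ← mul_smul, ← map_mul]
    refine braidConj_apply_eq_iff.2 ?_
    rw [map_mul, Units.val_mul, ← mul_assoc]
    exact (PresentedMonoid.mk_eq_mk_of_rel (.TV1 j i h.symm)).symm

theorem actsAsTranspositions_σ (n : ℕ) : ActsAsTranspositions (n - 1) (conjFamily n .ν)
    (tieFamily n) (conjFamily n .σ) where
  mul_comm {i j} hi hj h := by
    lift i to Fin (n - 1) using hi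
    lift j to Fin (n - 1) using hj
    simp only [conjFamily_val, ← map_mul]
    exact congrArg _ (vb_rel (.commσν i j h))
  mul_mul {i j} hi hj h := by
    lift i to Fin (n - 1) using hi
    lift j to Fin (n - 1) using hj
    simp only [conjFamily_val, ← map_mul]
    exact congrArg _ (vb_rel (.mixed i j h))
  smul_of_not_adj {i j} hi hj h := by
    lift i to Fin (n - 1) using hi
    lift j to Fin (n - 1) using hj
    rw [conjFamily_val, tieFamily_val]
    exact braidConj_σ_apply_eq_iff.2 (PresentedMonoid.mk_eq_mk_of_rel (.T4 i j h))
  smul_of_adj {i j} hi hj h := by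
    lift i to Fin (n - 1) using hi
    lift j to Fin (n - 1) using hj
    rw [conjFamily_val, conjFamily_val, tieFamily_val]
    exact (braidConj_ν_apply_eq_iff.2 (PresentedMonoid.mk_eq_mk_of_rel (.TV4 i j h))).symm
  smul_smul {i j} hi hj h := by
    lift i to Fin (n - 1) using hi
    lift j to Fin (n - 1) using hj
    rw [conjFamily_val, conjFamily_val, tieFamily_val, tieFamily_val, ← mul_smul, ← map_mul]
    refine braidConj_apply_eq_iff.2 ?_
    rw [map_mul, Units.val_mul, ← mul_assoc]
    exact (PresentedMonoid.mk_eq_mk_of_rel (.TV3 j i h.symm)).symm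

/-- The element of the tied virtual braid monoid that ties the strands `a` and `b`. -/
noncomputable def strandTie (a b : Fin n) : PresentedMonoid (TVRel n) :=
  tie (conjFamily n .ν) (tieFamily n) a b

theorem strandTie_lo_hi (i : Fin (n - 1)) : strandTie (lo i) (hi i) = tvb (.e i) :=
  (tie_succ _ _ i.1).trans (tieFamily_val i)

theorem strandTie_self (a : Fin n) : strandTie a a = 1 :=
  tie_self _ _ _

theorem strandTie_comm (a b : Fin n) : strandTie a b = strandTie b a :=
  tie_comm _ _ _ _

theorem val_swap_lo_hi (i : Fin (n - 1)) (a : Fin n) :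
    (Equiv.swap (lo i) (hi i) a).1 = Equiv.swap i.1 (i.1 + 1) a.1 :=
  Fin.val_injective.map_swap _ _ _

theorem braidConj_ν_strandTie (i : Fin (n - 1)) (a b : Fin n) :
    braidConj n (vb (.ν i)) (strandTie a b) =
      strandTie (Equiv.swap (lo i) (hi i) a) (Equiv.swap (lo i) (hi i) b) := by
  have hν := actsAsTranspositions_ν n
  have h := hν.smul_tie (fun _ => conjFamily_ν_mul_self) hν i.2 (a := a) (b := b)
    (by omega) (by omega)
  rwa [conjFamily_val, ← val_swap_lo_hi, ← val_swap_lo_hi] at h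

theorem braidConj_σ_strandTie (i : Fin (n - 1)) (a b : Fin n) :
    braidConj n (vb (.σ i)) (strandTie a b) =
      strandTie (Equiv.swap (lo i) (hi i) a) (Equiv.swap (lo i) (hi i) b) := by
  have h := (actsAsTranspositions_ν n).smul_tie (fun _ => conjFamily_ν_mul_self)
    (actsAsTranspositions_σ n) i.2 (a := a) (b := b) (by omega) (by omega)
  rwa [conjFamily_val, ← val_swap_lo_hi, ← val_swap_lo_hi] at h

theorem commute_e (i j : Fin (n - 1)) : Commute (tvb (.e i)) (tvb (.e j)) :=
  PresentedMonoid.mk_eq_mk_of_rel (.T2 i j)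

theorem e_mul_braidConj_ν {i j : Fin (n - 1)} (h : adjIdx i j) :
    tvb (.e i) * braidConj n (vb (.ν j)) (tvb (.e i)) = tvb (.e i) * tvb (.e j) := by
  have hconj : tvb (.v j) * tvb (.e i) = braidConj n (vb (.ν j)) (tvb (.e i)) * tvb (.v j) :=
    braidConj_ν_apply_eq_iff.1 rfl
  have hTV6 : tvb (.e j) * tvb (.e i) * tvb (.v j) = tvb (.e i) * tvb (.v j) * tvb (.e i) :=
    PresentedMonoid.mk_eq_mk_of_rel (.TV6a j i h.symm)
  refine (Units.mul_left_inj (braidUnit (.ν j))).1 ?_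
  change _ * tvb (.v j) = _ * tvb (.v j)
  rw [mul_assoc, ← hconj, ← mul_assoc, ← hTV6, (commute_e i j).eq]

section
variable {π : VirtualBraidGroup n →* Equiv.Perm (Fin n)} (hπ : IsUnderlyingPerm π)
include hπ

theorem braidConj_strandTie (g : VirtualBraidGroup n) (a b : Fin n) :
    braidConj n g (strandTie a b) = strandTie (π g a) (π g b) := by
  have hg : g ∈ Subgroup.closure (Set.range PresentedGroup.of) := by
    rw [PresentedGroup.closure_range_of]
    trivial
  induction hg using Subgroup.closure_induction generalizing a b with
  | mem g hg =>
    obtain ⟨i | i, rfl⟩ := hg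
    · rw [braidConj_σ_strandTie, hπ.map_σ]
    · rw [braidConj_ν_strandTie, hπ.map_ν]
  | one => simp
  | mul g h _ _ hg hh => rw [map_mul, map_mul, MulAut.mul_apply, hh, hg]; rfl
  | inv g _ hg =>
    rw [map_inv, map_inv, MulAut.inv_apply, MulEquiv.symm_apply_eq, hg, ← Equiv.Perm.mul_apply,
      ← Equiv.Perm.mul_apply, mul_inv_cancel]
    rfl

theorem braidConj_e {g : VirtualBraidGroup n} (i : Fin (n - 1)) {a b : Fin n}
    (ha : π g (lo i) = a) (hb : π g (hi i) = b) : braidConj n g (tvb (.e i)) = strandTie a b := by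
  rw [← strandTie_lo_hi, braidConj_strandTie hπ, ha, hb]

theorem strandTie_triangle {a b c : Fin n} (h : [a, b, c].Nodup) :
    strandTie a b * strandTie b c = strandTie a b * strandTie a c := by
  obtain ⟨i, j, w, hij, rfl, rfl, rfl⟩ := exists_perm_lo_hi_hi h
  obtain ⟨g, rfl⟩ := hπ.surjective w
  have hne : lo i ≠ lo j ∧ lo i ≠ hi j := by
    simp only [ne_eq, Fin.ext_iff, lo, hi]
    omega
  have hj : strandTie (lo i) (hi j) = braidConj n (vb (.ν j)) (tvb (.e i)) := by
    refine (braidConj_e hπ i ?_ ?_).symm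
    · rw [hπ.map_ν, Equiv.swap_apply_of_ne_of_ne hne.1 hne.2]
    · rw [hπ.map_ν, hi_eq_lo hij, Equiv.swap_apply_left]
  have hstd : strandTie (lo i) (hi i) * strandTie (hi i) (hi j) =
      strandTie (lo i) (hi i) * strandTie (lo i) (hi j) := by
    rw [hj, strandTie_lo_hi, hi_eq_lo hij, strandTie_lo_hi, e_mul_braidConj_ν (Or.inl hij)]
  simpa only [map_mul, braidConj_strandTie hπ] using congrArg (braidConj n g) hstd

theorem commute_strandTie_perm (w : Equiv.Perm (Fin n)) (i j : Fin (n - 1)) :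
    Commute (strandTie (w (lo i)) (w (hi i))) (strandTie (w (lo j)) (w (hi j))) := by
  obtain ⟨g, rfl⟩ := hπ.surjective w
  rw [← braidConj_e hπ i rfl rfl, ← braidConj_e hπ j rfl rfl]
  exact (commute_e i j).map (braidConj n g)

theorem commute_strandTie_of_common {a b c : Fin n} (hab : a ≠ b) (hbc : b ≠ c) :
    Commute (strandTie a b) (strandTie b c) := by
  rcases eq_or_ne a c with rfl | hac
  · rw [strandTie_comm]
  obtain ⟨i, j, w, hij, rfl, rfl, rfl⟩ :=
    exists_perm_lo_hi_hi (a := a) (b := b) (c := c) (by simp [*])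
  simpa only [hi_eq_lo hij] using commute_strandTie_perm hπ w i j

theorem commute_strandTie (a b c d : Fin n) : Commute (strandTie a b) (strandTie c d) := by
  rcases eq_or_ne a b with rfl | hab
  · rw [strandTie_self]
    exact Commute.one_left _
  rcases eq_or_ne c d with rfl | hcd
  · rw [strandTie_self c]
    exact Commute.one_right _
  rcases eq_or_ne b c with rfl | hbc
  · exact commute_strandTie_of_common hπ hab hcd
  rcases eq_or_ne b d with rfl | hbd
  · rw [strandTie_comm c]
    exact commute_strandTie_of_common hπ hab hbc
  rcases eq_or_ne a c with rfl | hac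
  · rw [strandTie_comm a b]
    exact commute_strandTie_of_common hπ hab.symm hcd
  rcases eq_or_ne a d with rfl | had
  · rw [strandTie_comm a b, strandTie_comm c]
    exact commute_strandTie_of_common hπ hab.symm hac
  obtain ⟨i, j, w, rfl, rfl, rfl, rfl⟩ :=
    exists_perm_lo_hi_lo_hi (a := a) (b := b) (c := c) (d := d) (by simp [*])
  exact commute_strandTie_perm hπ w i j

theorem strandTie_idem (a b : Fin n) : strandTie a b * strandTie a b = strandTie a b := by
  rcases eq_or_ne a b with rfl | hab
  · rw [strandTie_self, one_mul]
  obtain ⟨i, w, rfl, rfl⟩ := exists_perm_lo_hi hab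
  obtain ⟨g, rfl⟩ := hπ.surjective w
  rw [← braidConj_e hπ i rfl rfl, ← map_mul]
  exact congrArg _ (PresentedMonoid.mk_eq_mk_of_rel (.T1 i))

theorem isTieFamily_strandTie : IsTieFamily (strandTie : Fin n → Fin n → _) where
  self := strandTie_self
  symm := strandTie_comm
  commute := commute_strandTie hπ
  triangle a b c := by
    rcases eq_or_ne a b with rfl | hab
    · rfl
    rcases eq_or_ne a c with rfl | hac
    · rw [strandTie_comm b a, strandTie_idem hπ, strandTie_self, mul_one]
    rcases eq_or_ne b c with rfl | hbc
    · rw [strandTie_idem hπ, strandTie_self, mul_one]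
    exact strandTie_triangle hπ (by simp [*])

end

end TiedVirtualBraidMonoid

section SimpleTranspositions

variable {n : ℕ}

theorem exists_adjacent_points {i j : Fin (n - 1)} (h : adjIdx i j) :
    ∃ a b c : Fin n, a ≠ b ∧ a ≠ c ∧ b ≠ c ∧
      Equiv.swap (lo i) (hi i) = Equiv.swap a b ∧ mu (lo i) (hi i) = mu a b ∧
      Equiv.swap (lo j) (hi j) = Equiv.swap b c ∧ mu (lo j) (hi j) = mu b c := by
  rcases h with h | h
  · refine ⟨lo i, hi i, hi j, ?_, ?_, ?_, rfl, rfl, ?_, ?_⟩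
    iterate 3 simp only [ne_eq, Fin.ext_iff, lo, hi]; omega
    all_goals rw [hi_eq_lo h]
  · refine ⟨hi i, lo i, lo j, ?_, ?_, ?_, Equiv.swap_comm _ _, mu_comm _ _, ?_, ?_⟩
    iterate 3 simp only [ne_eq, Fin.ext_iff, lo, hi]; omega
    · rw [← hi_eq_lo h, Equiv.swap_comm]
    · rw [← hi_eq_lo h, mu_comm]

theorem permAct_swap_mu_of_not_adjIdx {i j : Fin (n - 1)} (h : ¬adjIdx i j) :
    permAct (Equiv.swap (lo i) (hi i)) (mu (lo j) (hi j)) = mu (lo j) (hi j) := by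
  rcases eq_or_ne i j with rfl | hij
  · rw [permAct_mu, Equiv.swap_apply_left, Equiv.swap_apply_right, mu_comm]
  have hne : i.1 + 1 ≠ j.1 ∧ j.1 + 1 ≠ i.1 ∧ i.1 ≠ j.1 :=
    ⟨fun h' => h (Or.inl h'), fun h' => h (Or.inr h'), Fin.val_ne_of_ne hij⟩
  rw [permAct_mu, Equiv.swap_apply_of_ne_of_ne, Equiv.swap_apply_of_ne_of_ne] <;>
    simp only [ne_eq, Fin.ext_iff, lo, hi] <;> omega

theorem permAct_swap_permAct_swap_mu {i j : Fin (n - 1)} (h : adjIdx i j) :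
    permAct (Equiv.swap (lo j) (hi j)) (permAct (Equiv.swap (lo i) (hi i)) (mu (lo j) (hi j))) =
      mu (lo i) (hi i) := by
  obtain ⟨a, b, c, hab, hac, hbc, hswap_i, hmi, hswap_j, hmj⟩ := exists_adjacent_points h
  rw [hswap_i, hmi, hswap_j, hmj, permAct_swap_mu hac hbc, mu_comm a,
    permAct_swap_mu hab.symm hac.symm, mu_comm]

theorem mu_mul_permAct_swap_mu {i j : Fin (n - 1)} (h : adjIdx i j) :
    mu (lo j) (hi j) * permAct (Equiv.swap (lo i) (hi i)) (mu (lo j) (hi j)) =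
      mu (lo i) (hi i) * mu (lo j) (hi j) := by
  obtain ⟨a, b, c, -, hac, hbc, hswap, hmi, -, hmj⟩ := exists_adjacent_points h
  rw [hswap, hmi, hmj, permAct_swap_mu hac hbc, mu_comm b, mu_comm a c, ← mu_mul_mu_triangle,
    mul_comm, mu_comm b]

theorem permAct_swap_mu_mul_mu {i j : Fin (n - 1)} (h : adjIdx i j) :
    permAct (Equiv.swap (lo i) (hi i)) (mu (lo i) (hi i) * mu (lo j) (hi j)) =
      mu (lo i) (hi i) * mu (lo j) (hi j) := by
  obtain ⟨a, b, c, -, hac, hbc, hswap, hmi, -, hmj⟩ := exists_adjacent_points h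
  rw [hswap, hmi, hmj]
  calc permAct (Equiv.swap a b) (mu a b * mu b c)
      = permAct (Equiv.swap a b) (mu a b) * permAct (Equiv.swap a b) (mu b c) :=
        map_mul (partitionAction (Fin n) (Equiv.swap a b)) _ _
    _ = mu a b * mu a c := by
        rw [permAct_swap_mu hac hbc, permAct_mu, Equiv.swap_apply_left, Equiv.swap_apply_right,
          mu_comm]
    _ = mu a b * mu b c := (mu_mul_mu_triangle a b c).symm

end SimpleTranspositions

section SemidirectProduct

open MonoidSemidirectProduct

variable {n : ℕ}

/-- The semidirect product of the partition monoid and the virtual braid group. -/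
abbrev PartitionSemidirectProduct (π : VirtualBraidGroup n →* Equiv.Perm (Fin n)) :=
  MonoidSemidirectProduct ((partitionAction (Fin n)).comp π)

section

variable {π : VirtualBraidGroup n →* Equiv.Perm (Fin n)}

theorem inr_mul_inl_partition (g : VirtualBraidGroup n) (I : Setoid (Fin n)) :
    (inr g * inl I : PartitionSemidirectProduct π) = inl (permAct (π g) I) * inr g :=
  inr_mul_inl I g

variable {i j : Fin (n - 1)} {g h : VirtualBraidGroup n}

theorem inl_mu_mul_inr_mul_inr (hij : adjIdx i j) (hg : π g = Equiv.swap (lo j) (hi j))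
    (hh : π h = Equiv.swap (lo i) (hi i)) :
    (inl (mu (lo i) (hi i)) * inr g * inr h : PartitionSemidirectProduct π) =
      inr g * inr h * inl (mu (lo j) (hi j)) := by
  rw [mul_assoc (inr g), inr_mul_inl_partition, ← mul_assoc, inr_mul_inl_partition, hg, hh,
    permAct_swap_permAct_swap_mu hij]

theorem inr_mul_inl_mu_of_not_adjIdx (hij : ¬adjIdx i j) (hg : π g = Equiv.swap (lo i) (hi i)) :
    (inr g * inl (mu (lo j) (hi j)) : PartitionSemidirectProduct π) =
      inl (mu (lo j) (hi j)) * inr g := by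
  rw [inr_mul_inl_partition, hg, permAct_swap_mu_of_not_adjIdx hij]

theorem inl_mu_mul_inl_mu_mul_inr (hij : adjIdx i j) (hg : π g = Equiv.swap (lo i) (hi i)) :
    (inl (mu (lo i) (hi i)) * inl (mu (lo j) (hi j)) * inr g : PartitionSemidirectProduct π) =
      inl (mu (lo j) (hi j)) * inr g * inl (mu (lo j) (hi j)) := by
  rw [mul_assoc (inl (mu (lo j) (hi j))), inr_mul_inl_partition, ← mul_assoc, ← map_mul,
    ← map_mul, hg, mu_mul_permAct_swap_mu hij]

theorem inl_mu_mul_inr_mul_inl_mu (hij : adjIdx i j) (hg : π g = Equiv.swap (lo i) (hi i)) :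
    (inl (mu (lo j) (hi j)) * inr g * inl (mu (lo j) (hi j)) : PartitionSemidirectProduct π) =
      inr g * inl (mu (lo i) (hi i)) * inl (mu (lo j) (hi j)) := by
  rw [← inl_mu_mul_inl_mu_mul_inr hij hg, mul_assoc (inr g), ← map_mul, inr_mul_inl_partition, hg,
    permAct_swap_mu_mul_mu hij]

theorem inr_mul_inl_of_map_eq (hgh : π g = π h) (I : Setoid (Fin n)) :
    (inr g * inl I : PartitionSemidirectProduct π) = inr h * inl I * inr h⁻¹ * inr g := by
  rw [inr_mul_inl_partition, inr_mul_inl_partition, mul_assoc _ (inr h), ← map_mul, mul_inv_cancel,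
    map_one, mul_one, hgh]

end

/-- The images of the generators of the tied virtual braid monoid. -/
def semidirectGen (π : VirtualBraidGroup n →* Equiv.Perm (Fin n)) :
    TVGen n → PartitionSemidirectProduct π
  | .s i => inr (vb (.σ i))
  | .s' i => inr (vb (.σ i))⁻¹
  | .v i => inr (vb (.ν i))
  | .e i => inl (mu (lo i) (hi i))

variable {π : VirtualBraidGroup n →* Equiv.Perm (Fin n)} (hπ : IsUnderlyingPerm π)

include hπ in
theorem lift_semidirectGen_eq {x y : FreeMonoid (TVGen n)} (h : TVRel n x y) :
    FreeMonoid.lift (semidirectGen π) x = FreeMonoid.lift (semidirectGen π) y := by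
  induction h <;> simp only [map_mul, map_one, FreeMonoid.lift_eval_of, semidirectGen]
  case B0a i => rw [← map_mul, mul_inv_cancel, map_one]
  case B0b i => rw [← map_mul, inv_mul_cancel, map_one]
  case B1 i j h => simp only [← map_mul]; exact congrArg inr (vb_rel (.braidσ i j h))
  case V2 i j h => simp only [← map_mul]; exact congrArg inr (vb_rel (.braidν i j h))
  case B2 i j h => simp only [← map_mul]; exact congrArg inr (vb_rel (.commσσ i j h))
  case V3 i j h => simp only [← map_mul]; exact congrArg inr (vb_rel (.commνν i j h))
  case V5 i j h => simp only [← map_mul]; exact congrArg inr (vb_rel (.commσν i j h))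
  case V1 i =>
    rw [← map_mul, ← map_one inr]
    exact congrArg inr (PresentedGroup.one_of_mem (VRelator.invol i))
  case V4 i j h => simp only [← map_mul]; exact congrArg inr (vb_rel (.mixed i j h))
  case T1 i => rw [← map_mul, isTieFamily_mu.idem]
  case T2 i j => rw [← map_mul, ← map_mul, mul_comm]
  case T3 i j h => exact inl_mu_mul_inr_mul_inr h (hπ.map_σ j) (hπ.map_σ i)
  case TV1 i j h => exact inl_mu_mul_inr_mul_inr h (hπ.map_ν j) (hπ.map_ν i)
  case TV2 i j h => exact inl_mu_mul_inr_mul_inr h (hπ.map_ν j) (hπ.map_σ i)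
  case TV3 i j h => exact inl_mu_mul_inr_mul_inr h (hπ.map_σ j) (hπ.map_ν i)
  case T4 i j h => exact inr_mul_inl_mu_of_not_adjIdx h (hπ.map_σ i)
  case TV5 i j h => exact (inr_mul_inl_mu_of_not_adjIdx (mt Or.symm h) (hπ.map_ν j)).symm
  case T5a i j h => exact inl_mu_mul_inl_mu_mul_inr h (hπ.map_σ i)
  case TV6a i j h => exact inl_mu_mul_inl_mu_mul_inr h (hπ.map_ν i)
  case T5b i j h => exact inl_mu_mul_inr_mul_inl_mu h (hπ.map_σ i)
  case TV6b i j h => exact inl_mu_mul_inr_mul_inl_mu h (hπ.map_ν i)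
  case TV4 i j h => exact inr_mul_inl_of_map_eq ((hπ.map_ν i).trans (hπ.map_σ i).symm) _

/-- The homomorphism from the tied virtual braid monoid to the semidirect product. -/
def toSemidirect : PresentedMonoid (TVRel n) →* PartitionSemidirectProduct π :=
  PresentedMonoid.lift (semidirectGen π) fun _ _ => lift_semidirectGen_eq hπ

theorem braidUnits_mul_toHom (g : VirtualBraidGroup n) (I : Setoid (Fin n)) :
    braidUnits n g * (isTieFamily_strandTie hπ).toHom I =
      (isTieFamily_strandTie hπ).toHom (permAct (π g) I) * braidUnits n g := by
  have hf := isTieFamily_strandTie hπ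
  have hcomp : (braidConj n g).toMonoidHom.comp hf.toHom =
      hf.toHom.comp (partitionAction (Fin n) (π g)) :=
    partition_hom_ext fun a b =>
      calc braidConj n g (hf.toHom (mu a b))
          = strandTie (π g a) (π g b) := by rw [hf.toHom_mu, braidConj_strandTie hπ]
        _ = hf.toHom (permAct (π g) (mu a b)) := by rw [permAct_mu, hf.toHom_mu]
  exact braidConj_apply_eq_iff.1 (DFunLike.congr_fun hcomp I)

/-- The homomorphism from the semidirect product to the tied virtual braid monoid. -/
noncomputable def ofSemidirect : PartitionSemidirectProduct π →* PresentedMonoid (TVRel n) :=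
  lift (isTieFamily_strandTie hπ).toHom ((Units.coeHom _).comp (braidUnits n))
    (braidUnits_mul_toHom hπ)

theorem ofSemidirect_inl_mu (a b : Fin n) : ofSemidirect hπ (inl (mu a b)) = strandTie a b :=
  (lift_inl _ _ (braidUnits_mul_toHom hπ) _).trans (IsTieFamily.toHom_mu _ a b)

theorem ofSemidirect_inr (g : VirtualBraidGroup n) :
    ofSemidirect hπ (inr g) = braidUnits n g :=
  lift_inr _ _ (braidUnits_mul_toHom hπ) g

theorem ofSemidirect_comp_toSemidirect :
    (ofSemidirect hπ).comp (toSemidirect hπ) = MonoidHom.id _ := by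
  refine PresentedMonoid.ext (TVRel n) fun x => ?_
  cases x with
  | s i => exact ofSemidirect_inr hπ _
  | s' i => exact ofSemidirect_inr hπ _
  | v i => exact ofSemidirect_inr hπ _
  | e i => exact (ofSemidirect_inl_mu hπ _ _).trans (strandTie_lo_hi i)

theorem toSemidirect_braidUnits (g : VirtualBraidGroup n) :
    toSemidirect hπ (braidUnits n g) = inr g := by
  have hcomp : (Units.map (toSemidirect hπ)).comp (braidUnits n) =
      (inr : _ →* PartitionSemidirectProduct π).toHomUnits :=
    PresentedGroup.ext fun x => Units.ext <| by cases x <;> rfl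
  exact congrArg Units.val (DFunLike.congr_fun hcomp g)

theorem toSemidirect_strandTie (a b : Fin n) :
    toSemidirect hπ (strandTie a b) = inl (mu a b) := by
  rcases eq_or_ne a b with rfl | hab
  · rw [strandTie_self, mu_self, map_one]
    rfl
  obtain ⟨i, w, rfl, rfl⟩ := exists_perm_lo_hi hab
  obtain ⟨g, rfl⟩ := hπ.surjective w
  have hconj := congrArg (toSemidirect hπ)
    (braidConj_apply_eq_iff.1 (braidConj_e hπ (g := g) i rfl rfl))
  have he : toSemidirect hπ (tvb (.e i)) = inl (mu (lo i) (hi i)) := rfl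
  rw [map_mul, map_mul, toSemidirect_braidUnits, he, inr_mul_inl_partition, permAct_mu] at hconj
  exact (((Group.isUnit g).map inr).mul_left_inj.1 hconj).symm

theorem toSemidirect_comp_ofSemidirect :
    (toSemidirect hπ).comp (ofSemidirect hπ) = MonoidHom.id _ := by
  refine hom_ext (partition_hom_ext fun a b => ?_) (MonoidHom.ext fun g => ?_)
  · change toSemidirect hπ (ofSemidirect hπ (inl (mu a b))) = inl (mu a b)
    rw [ofSemidirect_inl_mu, toSemidirect_strandTie]
  · change toSemidirect hπ (ofSemidirect hπ (inr g)) = inr g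
    rw [ofSemidirect_inr, toSemidirect_braidUnits]

/-- The tied virtual braid monoid as a semidirect product. -/
noncomputable def tiedVirtualBraidMonoidEquiv :
    PresentedMonoid (TVRel n) ≃* PartitionSemidirectProduct π :=
  (toSemidirect hπ).toMulEquiv (ofSemidirect hπ) (ofSemidirect_comp_toSemidirect hπ)
    (toSemidirect_comp_ofSemidirect hπ)

end SemidirectProduct

/-- The tied virtual braid monoid `TVBₙ` is the semidirect product
`Pₙ ⋊ VBₙ`: for the homomorphism `π : VBₙ → Perm (Fin n)` with `π(σᵢ) = π(νᵢ)` the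
transposition `(i, i+1)`, there is a bijection `F : TVBₙ → Setoid (Fin n) × VBₙ` with
`F(1) = (⊥, 1)`, `F(sᵢ) = (⊥, σᵢ)`, `F(sᵢ') = (⊥, σᵢ⁻¹)`, `F(vᵢ) = (⊥, νᵢ)`,
`F(eᵢ) = (μ_{i,i+1}, 1)` and `F(x·y) = (F(x)₁ ⊔ π(F(x)₂) • F(y)₁, F(x)₂ · F(y)₂)`. -/
theorem tiedVirtualBraidMonoid_semidirect (n : ℕ) (hn : 2 ≤ n)
    (π : VirtualBraidGroup n →* Equiv.Perm (Fin n))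
    (hπσ : ∀ i : Fin (n - 1),
      π (PresentedGroup.of (VGen.σ i)) = Equiv.swap (lo i) (hi i))
    (hπν : ∀ i : Fin (n - 1),
      π (PresentedGroup.of (VGen.ν i)) = Equiv.swap (lo i) (hi i)) :
    ∃ F : PresentedMonoid (TVRel n) → Setoid (Fin n) × VirtualBraidGroup n,
      Function.Bijective F ∧
      F 1 = (⊥, 1) ∧
      (∀ i : Fin (n - 1),
        F (PresentedMonoid.of (TVRel n) (TVGen.s i)) = (⊥, PresentedGroup.of (VGen.σ i))) ∧
      (∀ i : Fin (n - 1),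
        F (PresentedMonoid.of (TVRel n) (TVGen.s' i)) =
          (⊥, (PresentedGroup.of (VGen.σ i))⁻¹)) ∧
      (∀ i : Fin (n - 1),
        F (PresentedMonoid.of (TVRel n) (TVGen.v i)) = (⊥, PresentedGroup.of (VGen.ν i))) ∧
      (∀ i : Fin (n - 1),
        F (PresentedMonoid.of (TVRel n) (TVGen.e i)) = (mu (lo i) (hi i), 1)) ∧
      ∀ x y : PresentedMonoid (TVRel n),
        F (x * y) = ((F x).1 ⊔ permAct (π (F x).2) ((F y).1), (F x).2 * (F y).2) := by
  let e := (tiedVirtualBraidMonoidEquiv ⟨hπσ, hπν⟩).toEquiv.trans MonoidSemidirectProduct.equivProd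
  exact ⟨e, e.bijective, rfl, fun _ => rfl, fun _ => rfl, fun _ => rfl, fun _ => rfl,
    fun x y => congrArg MonoidSemidirectProduct.equivProd
      (map_mul (tiedVirtualBraidMonoidEquiv ⟨hπσ, hπν⟩) x y)⟩
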